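/- arXiv:math/0107020 — 6 statements merged into one kernel-verified Lean document; each statement's English description precedes it below -/
import Mathlib

section
/- Let μ ∈ Λ* and let r, s be positive words. If v·r = v'·s (concatenation of words) where v ∈ L_μ^k and v' ∈ L_μ^l for some k, l ≥ 1, then v = v'. -/
/-- `Lset Λ μ k` is the set `L_μ^k` of words `ν = ν₁…ν_k ∈ Λ` of length `k`
such that `μν₁…ν_{k-1} ∈ Λ` but `μν ∉ Λ`. -/
def Lset {n : ℕ} (Λ : Set (List (Fin n))) (μ : List (Fin n)) (k : ℕ) :
    Set (List (Fin n)) :=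
  {ν | ν.length = k ∧ ν ∈ Λ ∧ μ ++ ν.dropLast ∈ Λ ∧ μ ++ ν ∉ Λ}

theorem Lset_aux {α : Type*} (Λ : Set (List α))
    (hΛsub : ∀ ν ∈ Λ, ∀ w : List α, w <:+: ν → w ∈ Λ) (μ v v' : List α)
    (h1 : μ ++ v ∉ Λ) (h2 : μ ++ v'.dropLast ∈ Λ) (hp : v <+: v') : v = v' := by
  obtain ⟨t, rfl⟩ := hp
  by_cases ht : t = []
  · simp [ht]
  · exfalso
    rw [List.dropLast_append_of_ne_nil ht] at h2
    refine h1 (hΛsub _ h2 _ ?_)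
    rw [← List.append_assoc]
    exact (List.prefix_append _ _).isInfix

theorem stmt_0 (n : ℕ) (hn : 1 ≤ n) (Λ : Set (List (Fin n)))
    (hΛe : ([] : List (Fin n)) ∈ Λ)
    (hΛg : ∀ i : Fin n, [i] ∈ Λ)
    (hΛsub : ∀ ν ∈ Λ, ∀ w : List (Fin n), w <:+: ν → w ∈ Λ)
    (μ : List (Fin n)) (hμ : μ ∈ Λ)
    (k l : ℕ) (hk : 1 ≤ k) (hl : 1 ≤ l)
    (v v' r s : List (Fin n))
    (hv : v ∈ Lset Λ μ k) (hv' : v' ∈ Lset Λ μ l)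
    (h : v ++ r = v' ++ s) :
    v = v' := by
  obtain ⟨_, _, a1, a2⟩ := hv
  obtain ⟨_, _, b1, b2⟩ := hv'
  have p1 : v <+: v ++ r := List.prefix_append _ _
  have p2 : v' <+: v ++ r := h ▸ List.prefix_append _ _
  rcases List.prefix_or_prefix_of_prefix p1 p2 with hp | hp
  · exact Lset_aux Λ hΛsub μ v v' a2 b1 hp
  · exact (Lset_aux Λ hΛsub μ v' v b2 a1 hp).symm
end

section
/- For every μ ∈ Λ*, the operator S_μ is a partial isometry: S_μ = S_μ S_μ* S_μ. -/
open ContinuousLinearMap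

/-- For a positive word `μ = μ₁…μ_k` over the alphabet `{1,…,n}`,
`Sw S μ = S_{μ₁} ⋯ S_{μ_k}`, with `Sw S [] = 1`. -/
noncomputable def Sw {H : Type*} [NormedAddCommGroup H] [InnerProductSpace ℂ H]
    {n : ℕ} (S : Fin n → H →L[ℂ] H) (μ : List (Fin n)) : H →L[ℂ] H :=
  (μ.map S).prod

theorem stmt_2 {H : Type*} [NormedAddCommGroup H] [InnerProductSpace ℂ H]
    [CompleteSpace H]
    (n : ℕ) (hn : 1 ≤ n) (S : Fin n → H →L[ℂ] H)
    (hpi : ∀ i, S i * adjoint (S i) * S i = S i)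
    (Λ : Set (List (Fin n)))
    (hΛe : ([] : List (Fin n)) ∈ Λ)
    (hΛg : ∀ i : Fin n, [i] ∈ Λ)
    (hΛsub : ∀ ν ∈ Λ, ∀ w : List (Fin n), w <:+: ν → w ∈ Λ)
    (hM1 : ∑ i, S i * adjoint (S i) = 1)
    (hM2 : ∀ μ ∈ Λ, ∀ ν ∈ Λ,
      Commute (Sw S μ * adjoint (Sw S μ)) (adjoint (Sw S ν) * Sw S ν))
    (μ : List (Fin n)) (hμ : μ ∈ Λ) :
    Sw S μ = Sw S μ * adjoint (Sw S μ) * Sw S μ := by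
  induction μ with
  | nil => simp [Sw, ← ContinuousLinearMap.star_eq_adjoint]
  | cons i ν ih =>
    have hν : ν ∈ Λ := hΛsub _ hμ ν (List.suffix_cons i ν).isInfix
    have hB := ih hν
    have hc := (hM2 ν hν [i] (hΛg i)).eq
    have hA := hpi i
    have e : Sw S (i :: ν) = S i * Sw S ν := by simp [Sw]
    have e1 : Sw S [i] = S i := by simp [Sw]
    rw [e1] at hc
    rw [e]
    simp only [← ContinuousLinearMap.star_eq_adjoint] at *
    generalize Sw S ν = B at *
    generalize S i = A at *
    symm
    calc A * B * star (A * B) * (A * B)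
        = A * (B * star B * (star A * A)) * B := by rw [star_mul]; simp only [mul_assoc]
      _ = (A * star A * A) * (B * star B * B) := by rw [hc]; simp only [mul_assoc]
      _ = A * B := by rw [hA, ← hB]
end

section
/- Let α be a positive word and ν ∈ Λ* with |α| ≥ |ν|. If α = ν·r for some positive word r, then S_ν S_ν* S_α = S_α; if α is not of the form ν·r for any positive word r, then S_ν S_ν* S_α = 0. -/
open ContinuousLinearMap

theorem orth_aux {H : Type*} [NormedAddCommGroup H] [InnerProductSpace ℂ H]
    [CompleteSpace H] {n : ℕ} (S : Fin n → H →L[ℂ] H)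
    (hpi : ∀ i, S i * adjoint (S i) * S i = S i)
    (hM1 : ∑ i, S i * adjoint (S i) = 1) (i j : Fin n) (hij : i ≠ j) :
    adjoint (S i) * S j = 0 := by
  ext y
  have key : ∀ (k : Fin n) (x : H),
      RCLike.re (inner ℂ ((S k * adjoint (S k)) x) x) = ‖adjoint (S k) x‖ ^ 2 := by
    intro k x
    rw [ContinuousLinearMap.mul_apply, ← ContinuousLinearMap.adjoint_inner_right,
      inner_self_eq_norm_sq]
  have hsum : ∀ x : H, ∑ k, ‖adjoint (S k) x‖ ^ 2 = ‖x‖ ^ 2 := by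
    intro x
    have h := congrArg (fun T : H →L[ℂ] H => RCLike.re (inner ℂ (T x) x)) hM1
    simp only [ContinuousLinearMap.sum_apply, sum_inner, map_sum, key,
      ContinuousLinearMap.one_apply, inner_self_eq_norm_sq] at h
    exact h
  have hj : ‖adjoint (S j) (S j y)‖ ^ 2 = ‖S j y‖ ^ 2 := by
    rw [← key, ← ContinuousLinearMap.mul_apply, hpi, inner_self_eq_norm_sq]
  have h := hsum (S j y)
  rw [← Finset.add_sum_erase _ _ (Finset.mem_univ j), hj] at h
  have h0 : ∑ k ∈ Finset.univ.erase j, ‖adjoint (S k) (S j y)‖ ^ 2 = 0 := by linarith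
  rw [Finset.sum_eq_zero_iff_of_nonneg (fun _ _ => by positivity)] at h0
  have := h0 i (by simp [hij])
  simpa using this

theorem Sw_cons_aux {H : Type*} [NormedAddCommGroup H] [InnerProductSpace ℂ H]
    {n : ℕ} (S : Fin n → H →L[ℂ] H) (i : Fin n) (w : List (Fin n)) :
    Sw S (i :: w) = S i * Sw S w := by simp [Sw]

theorem adj_mul_aux {H : Type*} [NormedAddCommGroup H] [InnerProductSpace ℂ H]
    [CompleteSpace H] (A B : H →L[ℂ] H) :
    adjoint (A * B) = adjoint B * adjoint A := ContinuousLinearMap.adjoint_comp A B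

theorem stmt_3 {H : Type*} [NormedAddCommGroup H] [InnerProductSpace ℂ H]
    [CompleteSpace H]
    (n : ℕ) (hn : 1 ≤ n) (S : Fin n → H →L[ℂ] H)
    (hpi : ∀ i, S i * adjoint (S i) * S i = S i)
    (Λ : Set (List (Fin n)))
    (hΛe : ([] : List (Fin n)) ∈ Λ)
    (hΛg : ∀ i : Fin n, [i] ∈ Λ)
    (hΛsub : ∀ ν ∈ Λ, ∀ w : List (Fin n), w <:+: ν → w ∈ Λ)
    (hM1 : ∑ i, S i * adjoint (S i) = 1)
    (hM2 : ∀ μ ∈ Λ, ∀ ν ∈ Λ,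
      Commute (Sw S μ * adjoint (Sw S μ)) (adjoint (Sw S ν) * Sw S ν))
    (α ν : List (Fin n)) (hν : ν ∈ Λ) (hlen : ν.length ≤ α.length) :
    (∀ r : List (Fin n), α = ν ++ r → Sw S ν * adjoint (Sw S ν) * Sw S α = Sw S α) ∧
    ((∀ r : List (Fin n), α ≠ ν ++ r) → Sw S ν * adjoint (Sw S ν) * Sw S α = 0) := by
  have step : ∀ (i : Fin n) (w β : List (Fin n)), w ∈ Λ →
      Sw S (i :: w) * adjoint (Sw S (i :: w)) * Sw S (i :: β) =
        S i * (Sw S w * adjoint (Sw S w) * Sw S β) := by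
    intro i w β hw
    have hc := (hM2 w hw [i] (hΛg i)).eq
    have h1 : Sw S [i] = S i := by simp [Sw]
    rw [h1] at hc
    rw [Sw_cons_aux, Sw_cons_aux, adj_mul_aux]
    calc S i * Sw S w * (adjoint (Sw S w) * adjoint (S i)) * (S i * Sw S β)
        = S i * (Sw S w * adjoint (Sw S w) * (adjoint (S i) * S i)) * Sw S β := by
          simp only [mul_assoc]
      _ = (S i * adjoint (S i) * S i) * (Sw S w * adjoint (Sw S w) * Sw S β) := by
          rw [hc]; simp only [mul_assoc]
      _ = _ := by rw [hpi]
  induction ν generalizing α with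
  | nil =>
    refine ⟨fun r _ => ?_, fun h => absurd rfl (h α)⟩
    have h1 : Sw S ([] : List (Fin n)) = 1 := by simp [Sw]
    have h2 : adjoint (1 : H →L[ℂ] H) = 1 := star_one _
    rw [h1, h2, one_mul, one_mul]
  | cons i w ih =>
    have hw : w ∈ Λ := hΛsub _ hν w (List.suffix_cons i w).isInfix
    cases α with
    | nil => simp at hlen
    | cons j β =>
      have hl : w.length ≤ β.length := by simpa using hlen
      by_cases hij : i = j
      · subst hij
        rw [step i w β hw]
        refine ⟨fun r hr => ?_, fun h => ?_⟩
        · rw [(ih β hw hl).1 r (by simpa using hr), Sw_cons_aux]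
        · rw [(ih β hw hl).2 (fun r hr => h r (by simp [hr])), mul_zero]
      · refine ⟨fun r hr => ?_, fun _ => ?_⟩
        · simp at hr
          exact absurd hr.1.symm hij
        · rw [Sw_cons_aux, Sw_cons_aux, adj_mul_aux]
          calc S i * Sw S w * (adjoint (Sw S w) * adjoint (S i)) * (S j * Sw S β)
              = S i * Sw S w * adjoint (Sw S w) * (adjoint (S i) * S j) * Sw S β := by
                simp only [mul_assoc]
            _ = 0 := by rw [orth_aux S hpi hM1 i j hij]; simp
end

section
/- Let α be a positive word and ν ∈ Λ* with |α| < |ν|. If ν = α·r for some positive word r, then S_ν S_ν* S_α = S_ν S_r*; if ν is not of the form α·r for any positive word r, then S_ν S_ν* S_α = 0. -/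
open ContinuousLinearMap

theorem aux_split {n : ℕ} : ∀ (α ν : List (Fin n)), α.length < ν.length →
    (∀ r, ν ≠ α ++ r) → ∃ c i j ν' α', i ≠ j ∧ ν = c ++ (i :: ν') ∧ α = c ++ (j :: α') := by
  intro α
  induction α with
  | nil => intro ν _ h; exact absurd rfl (h ν)
  | cons j α ih =>
    intro ν hl h
    cases ν with
    | nil => simp at hl
    | cons i ν =>
      by_cases hij : i = j
      · subst hij
        obtain ⟨c, i', j', ν', α', hne, h1, h2⟩ := ih ν (by simpa using hl)
          (fun r hr => h r (by simp [hr]))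
        exact ⟨i :: c, i', j', ν', α', hne, by simp [h1], by simp [h2]⟩
      · exact ⟨[], i, j, ν, α, hij, rfl, rfl⟩

theorem Sw_app {H : Type*} [NormedAddCommGroup H] [InnerProductSpace ℂ H]
    {n : ℕ} (S : Fin n → H →L[ℂ] H) (μ ν : List (Fin n)) :
    Sw S (μ ++ ν) = Sw S μ * Sw S ν := by simp [Sw]

theorem Sw_cons {H : Type*} [NormedAddCommGroup H] [InnerProductSpace ℂ H]
    {n : ℕ} (S : Fin n → H →L[ℂ] H) (i) (ν : List (Fin n)) :
    Sw S (i :: ν) = S i * Sw S ν := by simp [Sw]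

theorem aux_orth {H : Type*} [NormedAddCommGroup H] [InnerProductSpace ℂ H]
    [CompleteSpace H] (n : ℕ) (S : Fin n → H →L[ℂ] H)
    (hpi : ∀ i, S i * adjoint (S i) * S i = S i)
    (hM1 : ∑ i, S i * adjoint (S i) = 1) (i j : Fin n) (hij : i ≠ j) :
    star (S i) * S j = 0 := by
  ext y
  have h1 : S j (adjoint (S j) (S j y)) = S j y := congrArg (fun T => T y) (hpi j)
  have h2 : ∑ k, S k (adjoint (S k) (S j y)) = S j y := by
    have := congrArg (fun T : H →L[ℂ] H => T (S j y)) hM1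
    simpa [_root_.sum_apply] using this
  rw [← Finset.add_sum_erase _ _ (Finset.mem_univ j), h1] at h2
  have h3 := add_eq_left.mp h2
  have h4 : ∑ k ∈ Finset.univ.erase j, ‖adjoint (S k) (S j y)‖ ^ 2 = 0 := by
    have h5 := congrArg (fun z => inner ℂ (S j y) z) h3
    simp only [inner_sum, inner_zero_right, ← adjoint_inner_left, inner_self_eq_norm_sq_to_K] at h5
    norm_cast at h5
    exact RCLike.ofReal_eq_zero.mp h5
  rw [Finset.sum_eq_zero_iff_of_nonneg (fun _ _ => by positivity)] at h4
  have h6 := h4 i (by simp [hij])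
  simpa [star_eq_adjoint] using h6

theorem stmt_4 {H : Type*} [NormedAddCommGroup H] [InnerProductSpace ℂ H]
    [CompleteSpace H]
    (n : ℕ) (hn : 1 ≤ n) (S : Fin n → H →L[ℂ] H)
    (hpi : ∀ i, S i * adjoint (S i) * S i = S i)
    (Λ : Set (List (Fin n)))
    (hΛe : ([] : List (Fin n)) ∈ Λ)
    (hΛg : ∀ i : Fin n, [i] ∈ Λ)
    (hΛsub : ∀ ν ∈ Λ, ∀ w : List (Fin n), w <:+: ν → w ∈ Λ)
    (hM1 : ∑ i, S i * adjoint (S i) = 1)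
    (hM2 : ∀ μ ∈ Λ, ∀ ν ∈ Λ,
      Commute (Sw S μ * adjoint (Sw S μ)) (adjoint (Sw S ν) * Sw S ν))
    (α ν : List (Fin n)) (hν : ν ∈ Λ) (hlen : α.length < ν.length) :
    (∀ r : List (Fin n), ν = α ++ r → Sw S ν * adjoint (Sw S ν) * Sw S α = Sw S ν * adjoint (Sw S r)) ∧
    ((∀ r : List (Fin n), ν ≠ α ++ r) → Sw S ν * adjoint (Sw S ν) * Sw S α = 0) := by
  have e : ∀ T : H →L[ℂ] H, adjoint T = star T := fun T => (star_eq_adjoint T).symm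
  have horth := aux_orth n S hpi hM1
  simp only [e] at *
  have hP : ∀ μ ∈ Λ, Sw S μ * star (Sw S μ) * Sw S μ = Sw S μ := by
    intro μ
    induction μ with
    | nil => intro _; simp [Sw]
    | cons i w ih =>
      intro h
      have hw : w ∈ Λ := hΛsub _ h w (List.suffix_cons i w).isInfix
      have hc := (hM2 w hw [i] (hΛg i)).eq
      have hi : Sw S [i] = S i := by simp [Sw]
      rw [hi] at hc
      rw [Sw_cons, star_mul]
      calc _ = S i * ((Sw S w * star (Sw S w)) * (star (S i) * S i)) * Sw S w := by
            simp only [mul_assoc]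
        _ = (S i * star (S i) * S i) * (Sw S w * star (Sw S w) * Sw S w) := by
            rw [hc]; simp only [mul_assoc]
        _ = _ := by rw [hpi, ih hw]
  constructor
  · rintro r rfl
    have ha : α ∈ Λ := hΛsub _ hν α (List.prefix_append α r).isInfix
    have hr : r ∈ Λ := hΛsub _ hν r (List.suffix_append α r).isInfix
    rw [Sw_app, star_mul]
    calc _ = Sw S α * ((Sw S r * star (Sw S r)) * (star (Sw S α) * Sw S α)) := by
          simp only [mul_assoc]
      _ = (Sw S α * star (Sw S α) * Sw S α) * (Sw S r * star (Sw S r)) := by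
          rw [(hM2 r hr α ha).eq]; simp only [mul_assoc]
      _ = _ := by rw [hP α ha]; simp only [mul_assoc]
  · intro h
    obtain ⟨c, i, j, ν', α', hij, rfl, rfl⟩ := aux_split α ν hlen h
    have hc : c ∈ Λ := hΛsub _ hν c (List.prefix_append c _).isInfix
    have hcm := (hM2 [i] (hΛg i) c hc).eq
    have hi : Sw S [i] = S i := by simp [Sw]
    rw [hi] at hcm
    have hs : star (S i) * S i * star (S i) = star (S i) := by
      have := congrArg star (hpi i)
      simpa [star_mul, mul_assoc] using this
    have key : star (S i) * (star (Sw S c) * Sw S c) * S j = 0 := by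
      calc _ = star (S i) * ((S i * star (S i)) * (star (Sw S c) * Sw S c)) * S j := by
            conv_lhs => rw [← hs]
            simp only [mul_assoc]
        _ = star (S i) * (star (Sw S c) * Sw S c) * S i * (star (S i) * S j) := by
            rw [hcm]; simp only [mul_assoc]
        _ = 0 := by rw [horth i j hij, mul_zero]
    simp only [Sw_app, Sw_cons, star_mul]
    calc _ = Sw S c * (S i * Sw S ν') * star (Sw S ν') *
            (star (S i) * (star (Sw S c) * Sw S c) * S j) * Sw S α' := by
          simp only [mul_assoc]
      _ = 0 := by rw [key, mul_zero, zero_mul]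
end

section
/- If ν is a positive word with ν ∉ Λ*, then S_ν = 0. -/
open ContinuousLinearMap

theorem stmt_5 {H : Type*} [NormedAddCommGroup H] [InnerProductSpace ℂ H]
    [CompleteSpace H]
    (n : ℕ) (hn : 1 ≤ n) (S : Fin n → H →L[ℂ] H)
    (hpi : ∀ i, S i * adjoint (S i) * S i = S i)
    (Λ : Set (List (Fin n)))
    (hΛe : ([] : List (Fin n)) ∈ Λ)
    (hΛg : ∀ i : Fin n, [i] ∈ Λ)
    (hΛsub : ∀ ν ∈ Λ, ∀ w : List (Fin n), w <:+: ν → w ∈ Λ)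
    (hM1 : ∑ i, S i * adjoint (S i) = 1)
    (hM2 : ∀ μ ∈ Λ, ∀ ν ∈ Λ,
      Commute (Sw S μ * adjoint (Sw S μ)) (adjoint (Sw S ν) * Sw S ν))
    (hM3 : ∀ i : Fin n,
      HasSum (fun ν : ↥(⋃ k ≥ 1, Lset Λ [i] k) => Sw S ν.1 * adjoint (Sw S ν.1))
        (1 - adjoint (S i) * S i))
    (ν : List (Fin n)) (hν : ν ∉ Λ) :
    Sw S ν = 0 := by
  induction hk : ν.length using Nat.strong_induction_on generalizing ν with
  | _ k ih =>
  subst hk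
  cases ν with
  | nil => exact absurd hΛe hν
  | cons i α =>
  have hcons : Sw S (i :: α) = S i * Sw S α := by simp [Sw]
  by_cases hα : α ∈ Λ
  swap
  · rw [hcons, ih α.length (by simp) α hα rfl, mul_zero]
  have hne : α ≠ [] := by
    rintro rfl
    exact hν (hΛg i)
  by_cases hd : [i] ++ α.dropLast ∈ Λ
  swap
  · have h0 := ih ([i] ++ α.dropLast).length (by
      have := List.length_pos_iff.mpr hne
      simp; omega) _ hd rfl
    have : i :: α = ([i] ++ α.dropLast) ++ [α.getLast hne] := by
      simp [List.dropLast_append_getLast]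
    rw [this]
    have h1 : Sw S (([i] ++ α.dropLast) ++ [α.getLast hne])
        = Sw S ([i] ++ α.dropLast) * Sw S [α.getLast hne] := by
      simp only [Sw, List.map_append, List.prod_append]
    rw [h1, h0, zero_mul]
  have hmem : α ∈ ⋃ k ≥ 1, Lset Λ [i] k := by
    simp only [Set.mem_iUnion]
    exact ⟨α.length, List.length_pos_iff.mpr hne, rfl, hα, hd, hν⟩
  have key : ∀ y, adjoint (Sw S α) (adjoint (S i) y) = 0 := by
    intro y
    set x := adjoint (S i) y with hx
    have hz : (1 - adjoint (S i) * S i) x = 0 := by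
      have h2 := congrArg adjoint (hpi i)
      simp only [← ContinuousLinearMap.star_eq_adjoint, star_mul, star_star] at h2
      have h3 := congrArg (fun T : H →L[ℂ] H => T y) h2
      simp only [ContinuousLinearMap.star_eq_adjoint, ContinuousLinearMap.mul_apply] at h3
      simp only [ContinuousLinearMap.sub_apply, ContinuousLinearMap.mul_apply,
        ContinuousLinearMap.one_apply, hx, h3, sub_self]
    have h4 := (((hM3 i).mapL (ContinuousLinearMap.apply ℂ H x)).mapL (innerSL ℂ x)).mapL
      Complex.reCLM
    simp only [ContinuousLinearMap.apply_apply, hz, map_zero] at h4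
    have h5 : ∀ w : List (Fin n), Complex.reCLM (innerSL ℂ x ((Sw S w * adjoint (Sw S w)) x))
        = ‖adjoint (Sw S w) x‖ ^ 2 := by
      intro w
      rw [innerSL_apply_apply, ContinuousLinearMap.mul_apply,
        ← ContinuousLinearMap.adjoint_inner_left, Complex.reCLM_apply]
      exact inner_self_eq_norm_sq (𝕜 := ℂ) _
    simp only [h5] at h4
    have h6 := le_hasSum h4 ⟨α, hmem⟩ (fun j _ => by positivity)
    have h7 : ‖adjoint (Sw S α) x‖ ^ 2 = 0 := le_antisymm h6 (by positivity)
    simpa using h7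
  have hadj : adjoint (Sw S (i :: α)) = 0 := by
    ext y
    rw [hcons, ← ContinuousLinearMap.star_eq_adjoint, star_mul]
    simpa [ContinuousLinearMap.star_eq_adjoint] using key y
  exact (LinearIsometryEquiv.map_eq_zero_iff _).mp hadj
end

section
/- If r ∈ F_n has reduced form r = r_1⋯r_k in which, for some index i, r_i is the inverse of a generator and r_{i+1} is a generator (i.e. r_i = g_a^{-1} and r_{i+1} = g_b with necessarily a ≠ b), then S(r) = 0. -/
open ContinuousLinearMap

/-- For `t` in the free group `F_n` with reduced form `t = t₁⋯t_k`,
`Smap S t = S(t₁)⋯S(t_k)`, where `S(g_j) = S j` and `S(g_j⁻¹) = (S j)*`;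
`Smap S 1 = 1`.  (In `FreeGroup (Fin n)`, the letter `(j, true)` is the
generator `g_j` and `(j, false)` is its inverse `g_j⁻¹`, and `.toWord`
is the reduced word of an element.) -/
noncomputable def Smap {H : Type*} [NormedAddCommGroup H] [InnerProductSpace ℂ H]
    [CompleteSpace H] {n : ℕ} (S : Fin n → H →L[ℂ] H) (t : FreeGroup (Fin n)) :
    H →L[ℂ] H :=
  (t.toWord.map (fun p => if p.2 then S p.1 else adjoint (S p.1))).prod

theorem adj_mul_zero_aux {H : Type*} [NormedAddCommGroup H] [InnerProductSpace ℂ H]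
    [CompleteSpace H] (n : ℕ) (S : Fin n → H →L[ℂ] H)
    (hpi : ∀ i, S i * adjoint (S i) * S i = S i)
    (hM1 : ∑ i, S i * adjoint (S i) = 1) (a b : Fin n) (hab : a ≠ b) :
    adjoint (S a) * S b = 0 := by
  ext x
  have key : ∀ (i : Fin n) (y : H),
      RCLike.re (inner ℂ ((S i * adjoint (S i)) y) y) = ‖adjoint (S i) y‖ ^ 2 := by
    intro i y
    rw [ContinuousLinearMap.mul_apply, ← ContinuousLinearMap.adjoint_inner_right,
      inner_self_eq_norm_sq]
  have h1 : ∑ i, ‖adjoint (S i) (S b x)‖ ^ 2 = ‖S b x‖ ^ 2 := by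
    have := congrArg (fun T : H →L[ℂ] H => RCLike.re (inner ℂ (T (S b x)) (S b x))) hM1
    simp only [ContinuousLinearMap.sum_apply, sum_inner, map_sum, key,
      ContinuousLinearMap.one_apply, inner_self_eq_norm_sq] at this
    exact this
  have h2 : ‖adjoint (S b) (S b x)‖ ^ 2 = ‖S b x‖ ^ 2 := by
    rw [← key]
    have : (S b * adjoint (S b)) (S b x) = S b x := congrArg (fun T : H →L[ℂ] H => T x) (hpi b)
    rw [this, inner_self_eq_norm_sq]
  have h3 : ∑ i ∈ ({a, b} : Finset (Fin n)), ‖adjoint (S i) (S b x)‖ ^ 2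
      ≤ ∑ i, ‖adjoint (S i) (S b x)‖ ^ 2 :=
    Finset.sum_le_sum_of_subset_of_nonneg (Finset.subset_univ _) (fun _ _ _ => by positivity)
  rw [Finset.sum_pair hab] at h3
  have h4 : ‖adjoint (S a) (S b x)‖ ^ 2 = 0 := le_antisymm (by linarith) (by positivity)
  simpa using h4

theorem stmt_11 {H : Type*} [NormedAddCommGroup H] [InnerProductSpace ℂ H]
    [CompleteSpace H]
    (n : ℕ) (hn : 1 ≤ n) (S : Fin n → H →L[ℂ] H)
    (hpi : ∀ i, S i * adjoint (S i) * S i = S i)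
    (hM1 : ∑ i, S i * adjoint (S i) = 1)
    (r : FreeGroup (Fin n))
    -- in the reduced form of `r`, some letter is the inverse of a generator
    -- and the next letter is a generator
    (h : ∃ (i : ℕ) (a b : Fin n),
      r.toWord[i]? = some (a, false) ∧ r.toWord[i + 1]? = some (b, true)) :
    Smap S r = 0 := by
  obtain ⟨i, a, b, ha, hb⟩ := h
  obtain ⟨hi, ha⟩ := List.getElem?_eq_some_iff.1 ha
  obtain ⟨hj, hb⟩ := List.getElem?_eq_some_iff.1 hb
  have hsplit : r.toWord = r.toWord.take i ++ (a, false) :: (b, true) :: r.toWord.drop (i + 2) := by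
    conv_lhs => rw [← List.take_append_drop i r.toWord, List.drop_eq_getElem_cons hi,
      List.drop_eq_getElem_cons hj, ha, hb]
  have hab : a ≠ b := by
    intro h
    have hr := List.isChain_iff_getElem.1 (FreeGroup.isReduced_toWord (x := r)) i hj
    rw [ha, hb] at hr
    exact absurd (hr h) (by simp)
  unfold Smap
  rw [hsplit]
  simp only [List.map_append, List.map_cons, List.prod_append, List.prod_cons, if_true]
  simp only [Bool.false_eq_true, if_false]
  rw [← mul_assoc (adjoint (S a)), adj_mul_zero_aux n S hpi hM1 a b hab]
  simp
end
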